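/- arXiv:2505.00292 — 3 statements merged into one kernel-verified Lean document; each statement's English description precedes it below -/
import Mathlib

section
/- Let X be a real-valued random variable with cumulative distribution function F_X, let V ~ Unif(0,1) be independent of X, and define U = F_X(X^-) + V·(F_X(X) - F_X(X^-)). Fix u ∈ (0,1) and let F_X^{-1}(u) = inf{z ∈ ℝ : F_X(z) ≥ u}. Then P(U ≤ u and X > F_X^{-1}(u)) = 0. -/
open MeasureTheory ProbabilityTheory

/-!
If `X > q` for a point `q` with `u ≤ F q`, then `F (X⁻) ≥ F q ≥ u` by monotonicity, so where `V > 0`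
the event `U ≤ u` forces `F X ≤ u ≤ F q`: no mass lies in `(q, X]`. The points `x > q` with
`F x ≤ F q` form an interval with left endpoint `q` which `X` almost surely avoids. Right continuity
of `F` makes the quantile `F⁻¹(u)` such a point `q`.
-/

open Set Filter Function

/-- The randomized probability integral transform `F(x⁻) + v (F(x) - F(x⁻))` of the distribution
function `F` at the point `x`, where `v` is the randomization. -/
noncomputable def randomizedPIT (F : ℝ → ℝ) (x v : ℝ) : ℝ :=
  leftLim F x + v * (F x - leftLim F x)

/-- The quantile transformation `F⁻¹(u)` of a distribution function `F`, with the value `0` where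
the infimum does not exist. -/
noncomputable def quantile (F : ℝ → ℝ) (u : ℝ) : ℝ :=
  sInf {z | u ≤ F z}

lemma apply_le_of_randomizedPIT_le {F : ℝ → ℝ} (hF : Monotone F) {q x v : ℝ} (hqx : q < x)
    (hv : 0 < v) (h : randomizedPIT F x v ≤ F q) : F x ≤ F q := by
  unfold randomizedPIT at h
  have hq_le : F q ≤ leftLim F x := hF.le_leftLim hqx
  have hjump_nonneg : 0 ≤ v * (F x - leftLim F x) :=
    mul_nonneg hv.le (sub_nonneg.2 (hF.leftLim_le le_rfl))
  have hjump_nonpos : F x - leftLim F x ≤ 0 :=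
    nonpos_of_mul_nonpos_right (by linarith) hv
  linarith

section NullSets

lemma measure_eq_zero_of_forall_measure_Ioc_eq_zero {α : Type*} [LinearOrder α]
    [TopologicalSpace α] [OrderClosedTopology α] [SecondCountableTopology α] [MeasurableSpace α]
    {μ : Measure α} {a : α} {s : Set α} (hs : s ⊆ Ioi a) (h : ∀ x ∈ s, μ (Ioc a x) = 0) :
    μ s = 0 := by
  refine measure_null_of_locally_null s fun x hx ↦ ?_
  by_cases hmax : ∃ y ∈ s, x < y
  · obtain ⟨y, hy, hxy⟩ := hmax
    exact ⟨Ioc a y, mem_nhdsWithin_of_mem_nhds (Ioc_mem_nhds (hs hx) hxy), h y hy⟩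
  · push Not at hmax
    exact ⟨Ioc a x, mem_of_superset self_mem_nhdsWithin fun y hy ↦ ⟨hs hy, hmax y hy⟩, h x hx⟩

lemma stieltjesFunction_measure_setOf_lt_and_apply_le_eq_zero {R : Type*} [LinearOrder R]
    [TopologicalSpace R] [OrderTopology R] [CompactIccSpace R] [SecondCountableTopology R]
    [DenselyOrdered R] [MeasurableSpace R] [BorelSpace R] (f : StieltjesFunction R) (q : R) :
    f.measure {x | q < x ∧ f x ≤ f q} = 0 :=
  measure_eq_zero_of_forall_measure_Ioc_eq_zero (fun _ hx ↦ hx.1) fun x hx ↦ by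
    rw [f.measure_Ioc, ENNReal.ofReal_eq_zero]
    exact sub_nonpos.2 hx.2

lemma ae_lt_restrict_Icc {α : Type*} [LinearOrder α] [TopologicalSpace α]
    [ClosedIicTopology α] [MeasurableSpace α] [OpensMeasurableSpace α]
    (μ : Measure α) [NullSingletonClass μ] (a b : α) : ∀ᵐ x ∂μ.restrict (Icc a b), a < x := by
  rw [← restrict_Ioc_eq_restrict_Icc]
  exact (ae_restrict_mem measurableSet_Ioc).mono fun _ hx ↦ hx.1

end NullSets

section Quantile

lemma le_stieltjesFunction_of_isGLB {R : Type*} [LinearOrder R] [TopologicalSpace R]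
    [OrderTopology R] (f : StieltjesFunction R) {u : ℝ} {q : R} (hq : IsGLB {z | u ≤ f z} q)
    (hne : {z | u ≤ f z}.Nonempty) : u ≤ f q :=
  ge_of_tendsto_of_frequently (f.right_continuous q) (hq.frequently_mem hne)

variable (μ : Measure ℝ) {u : ℝ}

lemma nonempty_setOf_le_cdf (hu : u < 1) : {z | u ≤ cdf μ z}.Nonempty :=
  ((tendsto_cdf_atTop μ).eventually_const_le hu).exists

lemma bddBelow_setOf_le_cdf (hu : 0 < u) : BddBelow {z | u ≤ cdf μ z} := by
  obtain ⟨a, ha⟩ := ((tendsto_cdf_atBot μ).eventually_lt_const hu).exists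
  exact ⟨a, fun z hz ↦ ((monotone_cdf μ).reflect_lt (ha.trans_le hz)).le⟩

lemma le_cdf_quantile (hu : u ∈ Ioo 0 1) : u ≤ cdf μ (quantile (cdf μ) u) :=
  have hne := nonempty_setOf_le_cdf μ hu.2
  le_stieltjesFunction_of_isGLB _ (isGLB_csInf hne (bddBelow_setOf_le_cdf μ hu.1)) hne

end Quantile

section RandomVariable

variable {Ω : Type*} [MeasurableSpace Ω] {P : Measure Ω} [IsProbabilityMeasure P] {X V : Ω → ℝ}

lemma cdf_map_apply (hX : AEMeasurable X P) (x : ℝ) :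
    cdf (P.map X) x = P.real {ω | X ω ≤ x} := by
  have := Measure.isProbabilityMeasure_map hX
  rw [cdf_eq_real, map_measureReal_apply_of_aemeasurable hX measurableSet_Iic]
  rfl

lemma ae_not_lt_and_cdf_map_le (hX : AEMeasurable X P) (q : ℝ) :
    ∀ᵐ ω ∂P, ¬(q < X ω ∧ cdf (P.map X) (X ω) ≤ cdf (P.map X) q) := by
  have := Measure.isProbabilityMeasure_map hX
  have hnull := stieltjesFunction_measure_setOf_lt_and_apply_le_eq_zero (cdf (P.map X)) q
  rw [measure_cdf] at hnull
  exact ae_of_ae_map hX (measure_eq_zero_iff_ae_notMem.1 hnull)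

theorem randomized_pit_above_quantile_general (hX : AEMeasurable X P) (hV : ∀ᵐ ω ∂P, 0 < V ω)
    {F : ℝ → ℝ} (hF : ∀ x, F x = P.real {ω | X ω ≤ x}) {u : ℝ} (hu : u ∈ Ioo 0 1) :
    P {ω | randomizedPIT F (X ω) (V ω) ≤ u ∧ quantile F u < X ω} = 0 := by
  obtain rfl : F = cdf (P.map X) := funext fun x ↦ (hF x).trans (cdf_map_apply hX x).symm
  rw [measure_eq_zero_iff_ae_notMem]
  filter_upwards [ae_not_lt_and_cdf_map_le hX (quantile (cdf (P.map X)) u), hV]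
    with ω hω hVω ⟨hUu, hqX⟩
  exact hω ⟨hqX, apply_le_of_randomizedPIT_le (monotone_cdf _) hqX hVω
    (hUu.trans (le_cdf_quantile _ hu))⟩

end RandomVariable

/-- Third term in the decomposition of the randomized probability integral transform:
`P(U ≤ u, X > F⁻¹(u)) = 0`. -/
theorem randomized_pit_above_quantile
    {Ω : Type*} [MeasureSpace Ω] [IsProbabilityMeasure (ℙ : Measure Ω)]
    (X V : Ω → ℝ) (hX : Measurable X) (hV : Measurable V)
    (hVunif : Measure.map V ℙ = volume.restrict (Set.Icc (0 : ℝ) 1))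
    (hindep : IndepFun X V ℙ)
    (F : ℝ → ℝ) (hF : ∀ x, F x = (ℙ {ω | X ω ≤ x}).toReal)
    (U : Ω → ℝ)
    (hU : ∀ ω, U ω = Function.leftLim F (X ω)
      + V ω * (F (X ω) - Function.leftLim F (X ω)))
    (u : ℝ) (hu : u ∈ Set.Ioo (0 : ℝ) 1)
    (Finv : ℝ) (hFinv : Finv = sInf {z : ℝ | u ≤ F z}) :
    ℙ {ω | U ω ≤ u ∧ Finv < X ω} = 0 := by
  have hVpos : ∀ᵐ ω, 0 < V ω :=
    ae_of_ae_map hV.aemeasurable (hVunif ▸ ae_lt_restrict_Icc volume 0 1)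
  simpa only [hU, hFinv, randomizedPIT, quantile] using
    randomized_pit_above_quantile_general hX.aemeasurable hVpos hF hu
end

section
/- Let (W, W^{(1)}, ..., W^{(B)}) be an exchangeable sequence of B+1 real-valued random variables and let θ ~ Unif(0,1) be independent of them. Define the Monte Carlo p-value p = (1/(B+1)) (θ + Σ_{b=1}^B (1{W^{(b)} > W} + θ·1{W^{(b)} = W})). Then p ~ Unif(0,1), i.e., P(p ≤ u) = u for every u ∈ [0,1]. -/
open MeasureTheory ProbabilityTheory

/-!
Scale the p-value by the number `n` of observations. When observation `i` is taken as the observed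
one, the scaled p-value is uniform on `[G i, G i + E i]`, with `G i` the number of observations
above `y i` and `E i` the number of those tied with it. Grouping the `E i` indices that share a
value, these intervals tile `[0, n]`, so the conditional distribution functions given `y` add up
over `i` to `n * u`, whatever `y` is. Exchangeability makes the `n` unconditional distribution
functions equal, hence each of them is `u`.
-/

section Ranks

open Finset

variable {α : Type*} [LinearOrder α]

lemma sum_apply_sum_le_sub_apply_sum_lt {M A : Type*} [AddCommMonoid M] [AddCommGroup A]
    (w : α → M) (g : M → A) (V : Finset α) :
    ∑ v ∈ V, (g (∑ a ∈ V with v ≤ a, w a) - g (∑ a ∈ V with v < a, w a)) =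
      g (∑ a ∈ V, w a) - g 0 := by
  induction V using Finset.induction_on_min with
  | empty => simp
  | insert m s hm ih =>
    have hms : m ∉ s := fun h => lt_irrefl _ (hm m h)
    have h_le_m : {a ∈ insert m s | m ≤ a} = insert m s :=
      filter_true_of_mem (by simpa using fun a ha => (hm a ha).le)
    have h_lt_m : {a ∈ insert m s | m < a} = s := by
      rw [filter_insert, if_neg (lt_irrefl m), filter_true_of_mem hm]
    have h_tail : ∀ v ∈ s, {a ∈ insert m s | v ≤ a} = {a ∈ s | v ≤ a} ∧
        {a ∈ insert m s | v < a} = {a ∈ s | v < a} := fun v hv => by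
      simp only [filter_insert, (hm v hv).not_ge, (hm v hv).not_gt, if_false, and_self]
    have h_above_m :
        ∑ v ∈ s, (g (∑ a ∈ insert m s with v ≤ a, w a) - g (∑ a ∈ insert m s with v < a, w a)) =
          g (∑ a ∈ s, w a) - g 0 := by
      rw [← ih]
      exact sum_congr rfl fun v hv => by rw [(h_tail v hv).1, (h_tail v hv).2]
    rw [sum_insert hms, h_le_m, h_lt_m, h_above_m, sub_add_sub_cancel]

variable {ι : Type*} [Fintype ι]

lemma card_filter_lt_add_card_filter_eq (y : ι → α) (i : ι) :
    #{b | y i < y b} + #{b | y b = y i} = #{b | y i ≤ y b} := by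
  classical
  rw [← card_union_of_disjoint (disjoint_filter.2 fun b _ hlt heq => hlt.ne' heq), ← filter_or]
  simp only [le_iff_lt_or_eq, eq_comm]

lemma sum_sub_div_card_ties {K : Type*} [Field K] [CharZero K] (y : ι → α) (g : ℕ → K) :
    ∑ i, (g #{b | y i ≤ y b} - g #{b | y i < y b}) / #{b | y b = y i} =
      g (Fintype.card ι) - g 0 := by
  have h_fiberwise (q : α → Prop) [DecidablePred q] :
      #{b | q (y b)} = ∑ v ∈ univ.image y with q v, #{b | y b = v} := by
    simp only [card_filter, sum_filter, sum_comp (fun v => if q v then 1 else 0) y]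
    simp
  have h_total : Fintype.card ι = ∑ v ∈ univ.image y, #{b | y b = v} :=
    card_eq_sum_card_image y univ
  rw [h_total, ← sum_apply_sum_le_sub_apply_sum_lt (fun v => #{b | y b = v}) g,
    sum_comp (fun v => (g #{b | v ≤ y b} - g #{b | v < y b}) / (#{b | y b = v} : K)) y]
  refine sum_congr rfl fun v hv => ?_
  have h_ties : (#{b | y b = v} : K) ≠ 0 := by
    simpa [filter_eq_empty_iff] using hv
  rw [nsmul_eq_mul, mul_div_cancel₀ _ h_ties, h_fiberwise (v ≤ ·), h_fiberwise (v < ·)]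

/-- The randomized Monte Carlo p-value of the one-sided test that rejects for large values of the
statistic, when `y i` is the observed statistic, the other entries of `y` are the simulated copies,
and `t` breaks ties. The index `i` itself is counted among the ties, which accounts for the
isolated summand `θ` in the usual formula. -/
noncomputable def monteCarloPValue (y : ι → α) (i : ι) (t : ℝ) : ℝ :=
  (#{b | y i < y b} + t * #{b | y b = y i}) / Fintype.card ι

lemma monteCarloPValue_comp_perm (y : ι → α) (π : Equiv.Perm ι) (i : ι) (t : ℝ) :
    monteCarloPValue (fun b => y (π b)) i t = monteCarloPValue y (π i) t := by
  simp only [monteCarloPValue, card_filter]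
  rw [Equiv.sum_comp π fun b => if y (π i) < y b then 1 else 0,
    Equiv.sum_comp π fun b => if y b = y (π i) then 1 else 0]

lemma monteCarloPValue_fin_zero {B : ℕ} (y : Fin (B + 1) → α) (t : ℝ) :
    monteCarloPValue y 0 t = (B + 1 : ℝ)⁻¹ * (t + ∑ b : Fin B,
      ((if y b.succ > y 0 then (1 : ℝ) else 0) + t * (if y b.succ = y 0 then (1 : ℝ) else 0))) := by
  simp only [monteCarloPValue, ← sum_boole, Fin.sum_univ_succ, lt_irrefl, if_true, if_false,
    sum_add_distrib, ← mul_sum, Fintype.card_fin, Nat.cast_add, Nat.cast_one]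
  ring

end Ranks

section Uniform

open Finset

lemma uniform_real_setOf_add_mul_le (a x : ℝ) {c : ℝ} (hc : 0 < c) :
    (volume.restrict (Set.Icc (0 : ℝ) 1)).real {t | a + t * c ≤ x} =
      (min (a + c) x - min a x) / c := by
  have h_inter : {t | a + t * c ≤ x} ∩ Set.Icc (0 : ℝ) 1 = Set.Icc 0 (min 1 ((x - a) / c)) := by
    ext t
    simp only [Set.mem_inter_iff, Set.mem_ofPred_eq, Set.mem_Icc, le_min_iff, le_div_iff₀ hc,
      le_sub_iff_add_le']
    tauto
  rw [measureReal_restrict_apply (measurableSet_le (by fun_prop) (by fun_prop)), h_inter,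
    Real.volume_real_Icc, sub_zero, eq_div_iff hc.ne', max_mul_of_nonneg _ _ hc.le,
    min_mul_of_nonneg _ _ hc.le, div_mul_cancel₀ _ hc.ne']
  grind

variable {ι α : Type*} [Fintype ι] [LinearOrder α]

lemma sum_uniform_monteCarloPValue_le (y : ι → α) {u : ℝ} (hu : u ∈ Set.Icc (0 : ℝ) 1) :
    ∑ i, (volume.restrict (Set.Icc (0 : ℝ) 1)).real {t | monteCarloPValue y i t ≤ u} =
      Fintype.card ι * u := by
  have h_card_nonneg : (0 : ℝ) ≤ Fintype.card ι := Nat.cast_nonneg _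
  have h_summand (i : ι) :
      (volume.restrict (Set.Icc (0 : ℝ) 1)).real {t | monteCarloPValue y i t ≤ u} =
        (min (#{b | y i ≤ y b} : ℝ) (Fintype.card ι * u) -
          min (#{b | y i < y b} : ℝ) (Fintype.card ι * u)) / #{b | y b = y i} := by
    have h_card : (0 : ℝ) < Fintype.card ι := Nat.cast_pos.2 (Fintype.card_pos_iff.2 ⟨i⟩)
    have h_ties : (0 : ℝ) < #{b | y b = y i} := Nat.cast_pos.2 (card_pos.2 ⟨i, by simp⟩)
    simp only [monteCarloPValue, div_le_iff₀' h_card]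
    rw [uniform_real_setOf_add_mul_le _ _ h_ties, ← card_filter_lt_add_card_filter_eq,
      Nat.cast_add]
  rw [sum_congr rfl fun i _ => h_summand i,
    sum_sub_div_card_ties y fun k => min (k : ℝ) (Fintype.card ι * u),
    min_eq_right (mul_le_of_le_one_right h_card_nonneg hu.2), Nat.cast_zero,
    min_eq_left (mul_nonneg h_card_nonneg hu.1), sub_zero]

end Uniform

section Probability

open Finset

variable {Ω ι α : Type*} [MeasurableSpace Ω] {P : Measure Ω} [Fintype ι] [LinearOrder α]
  [TopologicalSpace α] [OrderClosedTopology α] [SecondCountableTopology α] [MeasurableSpace α]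
  [OpensMeasurableSpace α]

lemma measurable_monteCarloPValue (i : ι) :
    Measurable fun z : (ι → α) × ℝ => monteCarloPValue z.1 i z.2 := by
  simp only [monteCarloPValue, ← sum_boole]
  have h_lt (b : ι) : MeasurableSet {z : (ι → α) × ℝ | z.1 i < z.1 b} :=
    measurableSet_lt (by fun_prop) (by fun_prop)
  have h_eq (b : ι) : MeasurableSet {z : (ι → α) × ℝ | z.1 b = z.1 i} :=
    measurableSet_eq_fun (by fun_prop) (by fun_prop)
  have h_above : Measurable fun z : (ι → α) × ℝ => ∑ b, if z.1 i < z.1 b then (1 : ℝ) else 0 :=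
    Finset.measurable_fun_sum _ fun b _ => .ite (h_lt b) measurable_const measurable_const
  have h_ties : Measurable fun z : (ι → α) × ℝ => ∑ b, if z.1 b = z.1 i then (1 : ℝ) else 0 :=
    Finset.measurable_fun_sum _ fun b _ => .ite (h_eq b) measurable_const measurable_const
  fun_prop

lemma sum_measure_monteCarloPValue_le {Y : Ω → ι → α} {θ : Ω → ℝ} (hY : AEMeasurable Y P)
    (hθ : HasLaw θ (volume.restrict (Set.Icc (0 : ℝ) 1)) P) (hindep : IndepFun Y θ P)
    {u : ℝ} (hu : u ∈ Set.Icc (0 : ℝ) 1) :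
    ∑ i, P {ω | monteCarloPValue (Y ω) i (θ ω) ≤ u} = ENNReal.ofReal (Fintype.card ι * u) := by
  set U : Measure ℝ := volume.restrict (Set.Icc (0 : ℝ) 1)
  have : IsProbabilityMeasure U := ⟨by simp [U]⟩
  have : IsProbabilityMeasure P := hθ.isProbabilityMeasure
  have : IsProbabilityMeasure (P.map Y) := Measure.isProbabilityMeasure_map hY
  have h_meas (i : ι) : MeasurableSet {z : (ι → α) × ℝ | monteCarloPValue z.1 i z.2 ≤ u} :=
    measurableSet_le (measurable_monteCarloPValue i) measurable_const
  have h_joint : HasLaw (fun ω => (Y ω, θ ω)) ((P.map Y).prod U) P :=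
    hindep.hasLaw_prod ⟨hY, rfl⟩ hθ
  calc ∑ i, P {ω | monteCarloPValue (Y ω) i (θ ω) ≤ u}
      = ∑ i, ∫⁻ y, U {t | monteCarloPValue y i t ≤ u} ∂P.map Y :=
        sum_congr rfl fun i _ => (h_joint.measure_eq (h_meas i)).trans
          (Measure.prod_apply (h_meas i))
    _ = ∫⁻ y, ∑ i, U {t | monteCarloPValue y i t ≤ u} ∂P.map Y :=
        (lintegral_finsetSum _ fun i _ => measurable_measure_prodMk_left (h_meas i)).symm
    _ = ∫⁻ _, ENNReal.ofReal (Fintype.card ι * u) ∂P.map Y := by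
        refine lintegral_congr fun y => ?_
        rw [← sum_uniform_monteCarloPValue_le y hu,
          ENNReal.ofReal_sum_of_nonneg fun _ _ => measureReal_nonneg]
        exact sum_congr rfl fun i _ => (ofReal_measureReal).symm
    _ = ENNReal.ofReal (Fintype.card ι * u) := by simp

lemma measure_monteCarloPValue_le_perm [IsFiniteMeasure P] {Y : Ω → ι → α} {θ : Ω → ℝ}
    (hθ : AEMeasurable θ P) (hindep : IndepFun Y θ P) {π : Equiv.Perm ι}
    (hπ : IdentDistrib (fun ω b => Y ω (π b)) Y P P) (i : ι) (u : ℝ) :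
    P {ω | monteCarloPValue (Y ω) (π i) (θ ω) ≤ u} =
      P {ω | monteCarloPValue (Y ω) i (θ ω) ≤ u} := by
  have h_indep_perm : IndepFun (fun ω b => Y ω (π b)) θ P :=
    hindep.comp (φ := fun (y : ι → α) b => y (π b)) (by fun_prop) measurable_id
  have h_ident := (hπ.prodMk (.refl hθ) h_indep_perm hindep).comp (measurable_monteCarloPValue i)
  simpa only [Set.preimage, Function.comp_def, Set.mem_Iic, monteCarloPValue_comp_perm] using
    h_ident.measure_mem_eq (measurableSet_Iic (a := u))

/-- The permutations preserving the law of `Y` carry `i₀` to every index, as they do for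
exchangeable and for cyclically stationary families. -/
theorem monte_carlo_p_value_uniform_general {Y : Ω → ι → α} {i₀ : ι}
    (hsymm : ∀ j, ∃ π : Equiv.Perm ι, π i₀ = j ∧ IdentDistrib (fun ω b => Y ω (π b)) Y P P)
    {θ : Ω → ℝ} (hθ : HasLaw θ (volume.restrict (Set.Icc (0 : ℝ) 1)) P)
    (hindep : IndepFun Y θ P) {u : ℝ} (hu : u ∈ Set.Icc (0 : ℝ) 1) :
    P {ω | monteCarloPValue (Y ω) i₀ (θ ω) ≤ u} = ENNReal.ofReal u := by
  have : IsProbabilityMeasure P := hθ.isProbabilityMeasure_iff.2 ⟨by simp⟩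
  obtain ⟨_, -, h_ident⟩ := hsymm i₀
  have h_equal (j : ι) : P {ω | monteCarloPValue (Y ω) j (θ ω) ≤ u} =
      P {ω | monteCarloPValue (Y ω) i₀ (θ ω) ≤ u} := by
    obtain ⟨π, rfl, hπ⟩ := hsymm j
    exact measure_monteCarloPValue_le_perm hθ.aemeasurable hindep hπ i₀ u
  have h_card : Fintype.card ι ≠ 0 := (Fintype.card_pos_iff.2 ⟨i₀⟩).ne'
  have h_sum := sum_measure_monteCarloPValue_le h_ident.aemeasurable_snd hθ hindep hu
  simp only [h_equal, sum_const, card_univ, nsmul_eq_mul, ENNReal.ofReal_mul (Nat.cast_nonneg _),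
    ENNReal.ofReal_natCast] at h_sum
  exact (ENNReal.mul_right_inj (Nat.cast_ne_zero.2 h_card) (ENNReal.natCast_ne_top _)).1 h_sum

end Probability

/-- **Uniformity of the Monte Carlo p-value of the empirical test.** Let
`(Y 0, Y 1, ..., Y B)` be an exchangeable sequence of `B + 1` real random variables, where
`W = Y 0` is the observed statistic and `W⁽ᵇ⁾ = Y b` (`b = 1, ..., B`) are the simulated
copies, and let `θ ~ Unif(0,1)` be independent of them. Then the Monte Carlo p-value
`p = (1/(B+1)) (θ + Σ_{b=1}^B (1{W⁽ᵇ⁾ > W} + θ·1{W⁽ᵇ⁾ = W}))` is distributed as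
`Unif(0,1)`. -/
theorem monte_carlo_p_value_uniform
    {Ω : Type*} [MeasureSpace Ω] [IsProbabilityMeasure (ℙ : Measure Ω)]
    (B : ℕ) (Y : Fin (B + 1) → Ω → ℝ) (hY : ∀ b, Measurable (Y b))
    (hexch : ∀ π : Equiv.Perm (Fin (B + 1)),
      Measure.map (fun ω => fun b => Y (π b) ω) ℙ
        = Measure.map (fun ω => fun b => Y b ω) ℙ)
    (θ : Ω → ℝ) (hθ : Measurable θ)
    (hθunif : Measure.map θ ℙ = volume.restrict (Set.Icc (0 : ℝ) 1))
    (hindep : IndepFun (fun ω => fun b => Y b ω) θ ℙ)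
    (p : Ω → ℝ)
    (hp : ∀ ω, p ω = (B + 1 : ℝ)⁻¹ * (θ ω + ∑ b : Fin B,
      ((if Y b.succ ω > Y 0 ω then (1 : ℝ) else 0)
        + θ ω * (if Y b.succ ω = Y 0 ω then (1 : ℝ) else 0)))) :
    ∀ u ∈ Set.Icc (0 : ℝ) 1, ℙ {ω | p ω ≤ u} = ENNReal.ofReal u := by
  intro u hu
  have hYm : Measurable fun ω b => Y b ω := measurable_pi_lambda _ hY
  have hp_eq (ω : Ω) : p ω = monteCarloPValue (fun b => Y b ω) 0 (θ ω) := by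
    rw [hp, monteCarloPValue_fin_zero]
  simp only [hp_eq]
  exact monte_carlo_p_value_uniform_general
    (fun j => ⟨Equiv.swap 0 j, Equiv.swap_apply_left 0 j,
      (measurable_pi_lambda _ fun _ => hY _).aemeasurable, hYm.aemeasurable, hexch _⟩)
    ⟨hθ.aemeasurable, hθunif⟩ hindep hu
end

section
/- Let X = (X_1, ..., X_{n+1}) be an exchangeable sequence of 𝒳-valued random variables and let s : 𝒳^{n+1} → (0, ∞) be a measurable positive function. For a permutation π of {1, ..., n+1}, write X_π = (X_{π(1)}, ..., X_{π(n+1)}). Then E[ s(X) / Σ_π s(X_π) ] = 1/(n+1)!, where the sum in the denominator ranges over all (n+1)! permutations π of {1, ..., n+1}. -/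
open MeasureTheory ProbabilityTheory

/-!
The law of an exchangeable family is invariant under the group `G` of coordinate permutations, so
for `f = s / ∑ g, s (g • ·)` all the translates `f (g • ·)` have the same integral. The denominator
is constant on orbits, hence the translates add up to `1`, and each integral is `1 / |G|`.
-/

section OrbitSum

/-- The sum of `s` along the orbit of a point under a finite group `G`, where each point of the
orbit counts with the order of its stabilizer. For `G` permuting coordinates it is the
denominator of the e-variable. -/
def orbitSum (G : Type*) {E M : Type*} [Group G] [Fintype G] [MulAction G E] [AddCommMonoid M]
    (s : E → M) (x : E) : M :=
  ∑ g : G, s (g • x)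

variable {G E M : Type*} [Group G] [Fintype G] [MulAction G E]

lemma orbitSum_smul [AddCommMonoid M] (s : E → M) (g : G) (x : E) :
    orbitSum G s (g • x) = orbitSum G s x := by
  simp only [orbitSum, ← mul_smul]
  exact Equiv.sum_comp (Equiv.mulRight g) fun h => s (h • x)

lemma orbitSum_div_orbitSum [DivisionSemiring M] {s : E → M} {x : E} (hx : orbitSum G s x ≠ 0) :
    orbitSum G (fun y => s y / orbitSum G s y) x = 1 := by
  calc orbitSum G (fun y => s y / orbitSum G s y) x
      = ∑ g : G, s (g • x) / orbitSum G s x :=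
        Finset.sum_congr rfl fun g _ => congrArg (s (g • x) / ·) (orbitSum_smul s g x)
    _ = orbitSum G s x / orbitSum G s x := (Finset.sum_div _ _ _).symm
    _ = 1 := div_self hx

lemma le_orbitSum [AddCommMonoid M] [PartialOrder M] [IsOrderedAddMonoid M] {s : E → M} {x : E}
    (hs : ∀ g : G, 0 ≤ s (g • x)) : s x ≤ orbitSum G s x := by
  simpa only [orbitSum, one_smul] using
    Finset.single_le_sum (f := fun g : G => s (g • x)) (fun g _ => hs g) (Finset.mem_univ 1)

lemma abs_div_orbitSum_le_one [Field M] [LinearOrder M] [IsStrictOrderedRing M] {s : E → M} {x : E}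
    (hs : ∀ g : G, 0 ≤ s (g • x)) : |s x / orbitSum G s x| ≤ 1 := by
  have hsx : 0 ≤ s x := by simpa only [one_smul] using hs 1
  have hle : s x ≤ orbitSum G s x := le_orbitSum hs
  rw [abs_of_nonneg (div_nonneg hsx (hsx.trans hle))]
  exact div_le_one_of_le₀ hle (hsx.trans hle)

end OrbitSum

section InvariantMeasure

variable (G : Type*) {E : Type*} [Group G] [Fintype G] [MulAction G E] [MeasurableSpace E]
  [MeasurableConstSMul G E] {μ : Measure E} [SMulInvariantMeasure G E μ]

lemma aemeasurable_orbitSum {s : E → ℝ} (hs : AEMeasurable s μ) :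
    AEMeasurable (orbitSum G s) μ :=
  Finset.aemeasurable_fun_sum _ fun g _ =>
    hs.comp_quasiMeasurePreserving (measurePreserving_smul g μ).quasiMeasurePreserving

lemma integral_orbitSum {F : Type*} [NormedAddCommGroup F] [NormedSpace ℝ F] {f : E → F}
    (hf : Integrable f μ) : ∫ x, orbitSum G f x ∂μ = Fintype.card G • ∫ x, f x ∂μ := by
  have hf_smul (g : G) : Integrable (fun x => f (g • x)) μ :=
    (measurePreserving_smul g μ).integrable_comp_of_integrable hf
  simp only [orbitSum, integral_finsetSum _ fun g _ => hf_smul g, integral_smul_eq_self,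
    Finset.sum_const, Finset.card_univ]

lemma integrable_div_orbitSum [IsFiniteMeasure μ] {s : E → ℝ} (hs : AEMeasurable s μ)
    (hs_nonneg : 0 ≤ᵐ[μ] s) : Integrable (fun x => s x / orbitSum G s x) μ := by
  have hs_smul_nonneg : ∀ᵐ x ∂μ, ∀ g : G, 0 ≤ s (g • x) :=
    ae_all_iff.2 fun g => (measurePreserving_smul g μ).quasiMeasurePreserving.ae hs_nonneg
  refine .of_bound (hs.div (aemeasurable_orbitSum G hs)).aestronglyMeasurable 1 ?_
  filter_upwards [hs_smul_nonneg] with x hx using abs_div_orbitSum_le_one hx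

theorem integral_div_orbitSum [IsFiniteMeasure μ] {s : E → ℝ} (hs : AEMeasurable s μ)
    (hs_nonneg : 0 ≤ᵐ[μ] s) (hs_sum : ∀ᵐ x ∂μ, orbitSum G s x ≠ 0) :
    ∫ x, s x / orbitSum G s x ∂μ = μ.real Set.univ / Fintype.card G := by
  have hcard : (Fintype.card G : ℝ) ≠ 0 := Nat.cast_ne_zero.2 Fintype.card_ne_zero
  rw [eq_div_iff hcard, mul_comm, ← nsmul_eq_mul]
  calc Fintype.card G • ∫ x, s x / orbitSum G s x ∂μ
      = ∫ x, orbitSum G (fun y => s y / orbitSum G s y) x ∂μ :=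
        (integral_orbitSum G (integrable_div_orbitSum G hs hs_nonneg)).symm
    _ = ∫ _, (1 : ℝ) ∂μ := integral_congr_ae (hs_sum.mono fun _ => orbitSum_div_orbitSum)
    _ = μ.real Set.univ := by rw [integral_const, smul_eq_mul, mul_one]

end InvariantMeasure

section CoordinatePermutations

open scoped DomMulAct

instance fintypeDomMulAct (G : Type*) [Fintype G] : Fintype Gᵈᵐᵃ :=
  .ofEquiv G DomMulAct.mk

instance measurableConstSMul_domMulAct {G ι 𝒳 : Type*} [SMul G ι] [MeasurableSpace 𝒳] :
    MeasurableConstSMul Gᵈᵐᵃ (ι → 𝒳) where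
  measurable_const_smul _ := measurable_pi_lambda _ fun _ => measurable_pi_apply _

lemma orbitSum_perm {ι 𝒳 M : Type*} [AddCommMonoid M] [Fintype ι] [DecidableEq ι]
    (s : (ι → 𝒳) → M) (x : ι → 𝒳) :
    orbitSum (Equiv.Perm ι)ᵈᵐᵃ s x = ∑ π : Equiv.Perm ι, s fun i => x (π i) :=
  (Equiv.sum_comp DomMulAct.mk fun c => s (c • x)).symm

end CoordinatePermutations

section Exchangeable

open scoped DomMulAct Nat

variable {Ω 𝒳 ι : Type*} [MeasurableSpace Ω] [MeasurableSpace 𝒳] {μ : Measure Ω}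
  {X : ι → Ω → 𝒳}

/-- A family of random variables is exchangeable if permuting its indices leaves its joint law
unchanged. As part of `IdentDistrib`, the family is required to be jointly a.e. measurable. -/
def Exchangeable (X : ι → Ω → 𝒳) (μ : Measure Ω) : Prop :=
  ∀ π : Equiv.Perm ι, IdentDistrib (fun ω i => X (π i) ω) (fun ω i => X i ω) μ μ

lemma Exchangeable.aemeasurable (hX : Exchangeable X μ) : AEMeasurable (fun ω i => X i ω) μ :=
  (hX 1).aemeasurable_snd

lemma Exchangeable.smulInvariantMeasure_map (hX : Exchangeable X μ) :
    SMulInvariantMeasure (Equiv.Perm ι)ᵈᵐᵃ (ι → 𝒳) (μ.map fun ω i => X i ω) where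
  measure_preimage_smul c A hA := by
    rw [← Measure.map_apply (measurable_const_smul c) hA,
      AEMeasurable.map_map_of_aemeasurable (measurable_const_smul c).aemeasurable hX.aemeasurable]
    exact congrArg (· A) (hX (DomMulAct.mk.symm c)).map_eq

theorem permutation_e_variable_expectation_general [IsFiniteMeasure μ] [Fintype ι] [DecidableEq ι]
    (hX : Exchangeable X μ) {s : (ι → 𝒳) → ℝ} (hs : AEMeasurable s (μ.map fun ω i => X i ω))
    (hs_nonneg : 0 ≤ᵐ[μ.map fun ω i => X i ω] s)
    (hs_sum : ∀ᵐ x ∂μ.map fun ω i => X i ω, ∑ π : Equiv.Perm ι, s (fun i => x (π i)) ≠ 0) :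
    ∫ ω, s (fun i => X i ω) / ∑ π : Equiv.Perm ι, s (fun i => X (π i) ω) ∂μ
      = μ.real Set.univ / (Fintype.card ι)! := by
  have := hX.smulInvariantMeasure_map
  let G := (Equiv.Perm ι)ᵈᵐᵃ
  have hcard : Fintype.card G = (Fintype.card ι)! :=
    (Fintype.card_congr DomMulAct.mk.symm).trans Fintype.card_perm
  have hmeas := (integrable_div_orbitSum G hs hs_nonneg).aestronglyMeasurable
  have hmass : (μ.map fun ω i => X i ω).real Set.univ = μ.real Set.univ := by
    rw [map_measureReal_apply_of_aemeasurable hX.aemeasurable .univ, Set.preimage_univ]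
  simp only [← orbitSum_perm] at hs_sum
  calc ∫ ω, s (fun i => X i ω) / ∑ π : Equiv.Perm ι, s (fun i => X (π i) ω) ∂μ
      = ∫ x, s x / orbitSum G s x ∂μ.map fun ω i => X i ω := by
        rw [integral_map hX.aemeasurable hmeas]
        simp only [G, orbitSum_perm]
    _ = μ.real Set.univ / (Fintype.card ι)! := by
        rw [integral_div_orbitSum G hs hs_nonneg hs_sum, hmass, hcard]

end Exchangeable

/-- **Permutation-normalized statistics are exact e-variables for exchangeability (up to the
factor `(n+1)!`).** Let `X = (X 1, ..., X (n+1))` be an exchangeable sequence of `𝒳`-valued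
random variables and let `s : 𝒳^{n+1} → (0,∞)` be a measurable positive function. Writing
`X_π = (X_{π 1}, ..., X_{π (n+1)})` for a permutation `π` of `{1, ..., n+1}`, we have
`E[ s(X) / Σ_π s(X_π) ] = 1/(n+1)!`, the sum ranging over all `(n+1)!` permutations. -/
theorem permutation_e_variable_expectation
    {Ω 𝒳 : Type*} [MeasureSpace Ω] [IsProbabilityMeasure (ℙ : Measure Ω)]
    [MeasurableSpace 𝒳]
    (n : ℕ) (X : Fin (n + 1) → Ω → 𝒳) (hX : ∀ i, Measurable (X i))
    (hexch : ∀ π : Equiv.Perm (Fin (n + 1)),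
      Measure.map (fun ω => fun i => X (π i) ω) ℙ
        = Measure.map (fun ω => fun i => X i ω) ℙ)
    (s : (Fin (n + 1) → 𝒳) → ℝ) (hs : Measurable s)
    (hspos : ∀ x, 0 < s x) :
    ∫ ω, s (fun i => X i ω)
        / (∑ π : Equiv.Perm (Fin (n + 1)), s (fun i => X (π i) ω)) ∂ℙ
      = 1 / (Nat.factorial (n + 1) : ℝ) := by
  have hX_exch : Exchangeable X ℙ := fun π =>
    ⟨(measurable_pi_lambda _ fun i => hX (π i)).aemeasurable,
      (measurable_pi_lambda _ hX).aemeasurable, hexch π⟩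
  have hsum_pos (x : Fin (n + 1) → 𝒳) : 0 < ∑ π : Equiv.Perm (Fin (n + 1)), s fun i => x (π i) :=
    Finset.sum_pos (fun _ _ => hspos _) Finset.univ_nonempty
  simpa only [probReal_univ, Fintype.card_fin] using
    permutation_e_variable_expectation_general hX_exch hs.aemeasurable
      (.of_forall fun x => (hspos x).le) (.of_forall fun x => (hsum_pos x).ne')
end
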